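/- The set of closed subgroups of ℝⁿ of maximal rank (those generating ℝⁿ as a vector space) is open and dense in the Chabauty space 𝒞(ℝⁿ), and is contractible. -/

import Mathlib

noncomputable section

abbrev Euc (n : ℕ) := EuclideanSpace ℝ (Fin n)

/-- A point of the Chabauty space of ℝⁿ: a closed additive subgroup. -/
def ChabautyPoint (n : ℕ) : Type := {Γ : AddSubgroup (Euc n) // IsClosed (Γ : Set (Euc n))}

/-- The Chabauty (Fell) topology on the space of closed subgroups of ℝⁿ. -/
instance chabautyTopology (n : ℕ) : TopologicalSpace (ChabautyPoint n) :=
  TopologicalSpace.generateFrom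
    ({S | ∃ K : Set (Euc n), IsCompact K ∧
        S = {Γ : ChabautyPoint n | ((Γ.1 : Set (Euc n)) ∩ K) = ∅}} ∪
     {S | ∃ U : Set (Euc n), IsOpen U ∧
        S = {Γ : ChabautyPoint n | ((Γ.1 : Set (Euc n)) ∩ U).Nonempty}})

/-! A closed subgroup `Γ` of maximal rank contains a basis of `ℝⁿ`, and every closed subgroup `Δ`
near `Γ` contains a basis close to that one; hence maximal rank is an open condition. The lattices
spanned by these bases have fundamental domains of diameter bounded by a common constant `C`, so
`t Δ` meets every closed ball of radius `|t| C` for all `Δ` near `Γ`. This is why `t Δ` converges to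
`ℝⁿ` as `t → 0` and `Δ → Γ`, which makes dilation a contraction onto `ℝⁿ`. For density, enlarge a
closed subgroup by a lattice of the orthogonal complement of its span: as the lattice is dilated,
its nonzero points leave every compact set. -/

open Filter Module Topology

section Bases

variable {K V : Type*} [DivisionRing K] [AddCommGroup V] [Module K V] [FiniteDimensional K V]

theorem span_eq_top_iff_exists_basis_mem {s : Set V} :
    Submodule.span K s = ⊤ ↔ ∃ b : Basis (Fin (finrank K V)) K V, ∀ i, b i ∈ s := by
  constructor
  · intro hs
    let b := Basis.ofSpan hs.ge
    refine ⟨b.reindex (b.indexEquiv (finBasis K V)), fun i ↦ ?_⟩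
    rw [Basis.reindex_apply]
    exact Basis.ofSpan_subset hs.ge (Set.mem_range_self _)
  · rintro ⟨b, hb⟩
    exact top_unique (b.span_eq.ge.trans (Submodule.span_mono (Set.range_subset_iff.2 hb)))

end Bases

section Lattices

variable {K E ι : Type*} [NormedField K] [LinearOrder K] [IsStrictOrderedRing K] [FloorRing K]
  [HasSolidNorm K] [NormedAddCommGroup E] [NormedSpace K E] [Fintype ι]

theorem exists_mem_norm_sub_le_sum_norm_basis {Γ : AddSubgroup E} (b : Basis ι K E)
    (hb : ∀ i, b i ∈ Γ) (x : E) : ∃ g ∈ Γ, ‖x - g‖ ≤ ∑ i, ‖b i‖ := by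
  have hΓ : Submodule.span ℤ (Set.range b) ≤ Γ.toIntSubmodule :=
    Submodule.span_le.2 (Set.range_subset_iff.2 hb)
  exact ⟨ZSpan.floor b x, hΓ (ZSpan.floor b x).2, ZSpan.norm_fract_le b x⟩

end Lattices

namespace ChabautyPoint

variable {n : ℕ} {Γ : ChabautyPoint n}

theorem isOpen_setOf_inter_eq_empty {K : Set (Euc n)} (hK : IsCompact K) :
    IsOpen {Γ : ChabautyPoint n | (Γ.1 : Set (Euc n)) ∩ K = ∅} :=
  TopologicalSpace.isOpen_generateFrom_of_mem (Or.inl ⟨K, hK, rfl⟩)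

theorem isOpen_setOf_inter_nonempty {U : Set (Euc n)} (hU : IsOpen U) :
    IsOpen {Γ : ChabautyPoint n | ((Γ.1 : Set (Euc n)) ∩ U).Nonempty} :=
  TopologicalSpace.isOpen_generateFrom_of_mem (Or.inr ⟨U, hU, rfl⟩)

theorem isClosed_setOf_mem : IsClosed {p : ChabautyPoint n × Euc n | p.2 ∈ p.1.1} := by
  refine isOpen_compl_iff.1 (isOpen_iff_mem_nhds.2 ?_)
  rintro ⟨Γ, x⟩ (hx : x ∉ Γ.1)
  obtain ⟨K, hKx, hKΓ, hK⟩ := local_compact_nhds (Γ.2.isOpen_compl.mem_nhds hx)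
  have hΓK : (Γ.1 : Set (Euc n)) ∩ K = ∅ :=
    (Set.subset_compl_iff_disjoint_left.1 hKΓ).inter_eq
  filter_upwards [prod_mem_nhds ((isOpen_setOf_inter_eq_empty hK).mem_nhds hΓK) hKx]
  rintro ⟨Δ, y⟩ ⟨hΔ, hy⟩ hyΔ
  exact Set.notMem_empty y (hΔ.subset ⟨hyΔ, hy⟩)

theorem eventually_exists_mem {x : Euc n} (hx : x ∈ Γ.1) {p : Euc n → Prop}
    (hp : ∀ᶠ y in 𝓝 x, p y) : ∀ᶠ Δ in 𝓝 Γ, ∃ y ∈ Δ.1, p y := by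
  obtain ⟨U, hUp, hU, hxU⟩ := eventually_nhds_iff.1 hp
  filter_upwards [(isOpen_setOf_inter_nonempty hU).mem_nhds ⟨x, hx, hxU⟩]
  rintro Δ ⟨y, hyΔ, hyU⟩
  exact ⟨y, hyΔ, hUp y hyU⟩

theorem eventually_exists_forall_mem {ι : Type*} [Finite ι] {v : ι → Euc n}
    (hv : ∀ i, v i ∈ Γ.1) {p : (ι → Euc n) → Prop} (hp : ∀ᶠ w in 𝓝 v, p w) :
    ∀ᶠ Δ in 𝓝 Γ, ∃ w, (∀ i, w i ∈ Δ.1) ∧ p w := by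
  rw [nhds_pi] at hp
  obtain ⟨I, -, U, hU, hUp⟩ := Filter.mem_pi.1 hp
  have hmeet : ∀ᶠ Δ in 𝓝 Γ, ∀ i, ∃ y ∈ Δ.1, y ∈ U i :=
    eventually_all.2 fun i ↦ eventually_exists_mem (hv i) (hU i)
  filter_upwards [hmeet] with Δ hΔ
  choose w hwΔ hwU using hΔ
  exact ⟨w, hwΔ, hUp fun i _ ↦ hwU i⟩

theorem tendsto_nhds_of_eventually {α : Type*} {l : Filter α} {f : α → ChabautyPoint n}
    (h_notMem : ∀ x ∉ Γ.1, ∀ᶠ p in l ×ˢ 𝓝 x, p.2 ∉ (f p.1).1)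
    (h_mem : ∀ x ∈ Γ.1, ∀ U ∈ 𝓝 x, ∀ᶠ a in l, ∃ y ∈ (f a).1, y ∈ U) :
    Tendsto f l (𝓝 Γ) := by
  refine TopologicalSpace.tendsto_nhds_generateFrom_iff.2 ?_
  rintro s (⟨K, hK, rfl⟩ | ⟨U, hU, rfl⟩) hs
  · have hmiss : ∀ᶠ p in l ×ˢ 𝓝ˢ K, p.2 ∉ (f p.1).1 :=
      hK.mem_prod_nhdsSet_of_forall fun x hxK ↦
        h_notMem x fun hxΓ ↦ Set.notMem_empty x (hs.subset ⟨hxΓ, hxK⟩)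
    filter_upwards [hmiss.curry] with a ha
    exact Set.eq_empty_of_forall_notMem fun x hx ↦ ha.self_of_nhdsSet x hx.2 hx.1
  · obtain ⟨x, hxΓ, hxU⟩ := hs
    exact h_mem x hxΓ U (hU.mem_nhds hxU)

/-- The linear span of a closed subgroup, whose dimension is the rank of the subgroup. -/
abbrev linearSpan (Γ : ChabautyPoint n) : Submodule ℝ (Euc n) :=
  Submodule.span ℝ (Γ.1 : Set (Euc n))

/-- The set of closed subgroups of `ℝⁿ` of maximal rank. -/
def maximalRank (n : ℕ) : Set (ChabautyPoint n) :=
  {Γ | Γ.linearSpan = ⊤}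

theorem mem_maximalRank_iff_exists_basis :
    Γ ∈ maximalRank n ↔ ∃ b : Basis (Fin (finrank ℝ (Euc n))) ℝ (Euc n), ∀ i, b i ∈ Γ.1 :=
  span_eq_top_iff_exists_basis_mem

theorem eventually_exists_basis_sum_norm_lt (hΓ : Γ ∈ maximalRank n) :
    ∃ C : ℝ, ∀ᶠ Δ in 𝓝 Γ, ∃ b : Basis (Fin (finrank ℝ (Euc n))) ℝ (Euc n),
      (∀ i, b i ∈ Δ.1) ∧ ∑ i, ‖b i‖ < C := by
  obtain ⟨b, hb⟩ := mem_maximalRank_iff_exists_basis.1 hΓ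
  refine ⟨∑ i, ‖b i‖ + 1, ?_⟩
  have hindep : ∀ᶠ w in 𝓝 ⇑b, LinearIndependent ℝ w := b.linearIndependent.eventually
  have hnorm : ∀ᶠ w in 𝓝 ⇑b, ∑ i, ‖w i‖ < ∑ i, ‖b i‖ + 1 :=
    (Continuous.tendsto (by fun_prop) _).eventually_lt_const (lt_add_one _)
  filter_upwards [eventually_exists_forall_mem hb (hindep.and hnorm)]
  rintro Δ ⟨w, hwΔ, hw, hwC⟩
  have hspan := hw.span_eq_top_of_card_eq_finrank' (Fintype.card_fin _)
  refine ⟨Basis.mk hw hspan.ge, ?_⟩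
  simpa only [Basis.mk_apply] using ⟨hwΔ, hwC⟩

theorem isOpen_maximalRank (n : ℕ) : IsOpen (maximalRank n) := by
  refine isOpen_iff_mem_nhds.2 fun Γ hΓ ↦ ?_
  obtain ⟨C, hC⟩ := eventually_exists_basis_sum_norm_lt hΓ
  filter_upwards [hC]
  rintro Δ ⟨b, hbΔ, -⟩
  exact mem_maximalRank_iff_exists_basis.2 ⟨b, hbΔ⟩

section Thicken

variable (L : Submodule ℤ Γ.linearSpanᗮ) [DiscreteTopology L]

/-- For `t ≠ 0`, the orthogonal sum of `Γ` and the dilate `t⁻¹ L` of a discrete subgroup `L` of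
`Γ.linearSpanᗮ`, which approximates `Γ` when `t` is small. It is cut out by conditions on the two
orthogonal projections, so that it is visibly closed. -/
def thicken (t : ℝ) : ChabautyPoint n :=
  ⟨Γ.1.comap (Γ.linearSpan.starProjection : Euc n →+ Euc n) ⊓
      L.toAddSubgroup.comap
        (t • Γ.linearSpanᗮ.orthogonalProjectionOnto : Euc n →L[ℝ] Γ.linearSpanᗮ),
    (Γ.2.preimage Γ.linearSpan.starProjection.continuous).inter <|
      (AddSubgroup.isClosed_of_discrete (H := L.toAddSubgroup)).preimage
        (t • Γ.linearSpanᗮ.orthogonalProjectionOnto).continuous⟩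

variable {L}

theorem mem_thicken {t : ℝ} {x : Euc n} :
    x ∈ (thicken L t).1 ↔ Γ.linearSpan.starProjection x ∈ Γ.1 ∧
      t • Γ.linearSpanᗮ.orthogonalProjectionOnto x ∈ L :=
  Iff.rfl

theorem mem_thicken_of_mem (t : ℝ) {x : Euc n} (hx : x ∈ Γ.1) : x ∈ (thicken L t).1 := by
  have hxV : x ∈ Γ.linearSpan := Submodule.subset_span hx
  refine mem_thicken.2 ⟨?_, ?_⟩
  · rwa [Submodule.starProjection_eq_self_iff.2 hxV]
  · rw [Submodule.orthogonalProjectionOnto_eq_zero_iff.2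
      (Submodule.le_orthogonal_orthogonal _ hxV), smul_zero]
    exact L.zero_mem

theorem inv_smul_mem_thicken {t : ℝ} (ht : t ≠ 0) {z : Γ.linearSpanᗮ} (hz : z ∈ L) :
    t⁻¹ • (z : Euc n) ∈ (thicken L t).1 := by
  refine mem_thicken.2 ⟨?_, ?_⟩
  · rw [(Submodule.starProjection_apply_eq_zero_iff _).2 (Submodule.smul_mem _ _ z.2)]
    exact Γ.1.zero_mem
  · rwa [map_smul, smul_inv_smul₀ ht, Submodule.orthogonalProjectionOnto_mem_subspace_eq_self]

theorem thicken_mem_maximalRank [IsZLattice ℝ L] {t : ℝ} (ht : t ≠ 0) :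
    thicken L t ∈ maximalRank n := by
  have hspan : Γ.linearSpan ≤ (thicken L t).linearSpan :=
    Submodule.span_mono fun x ↦ mem_thicken_of_mem t
  have hL : Submodule.span ℝ (L : Set Γ.linearSpanᗮ) ≤
      (thicken L t).linearSpan.comap Γ.linearSpanᗮ.subtype := by
    refine Submodule.span_le.2 fun z hz ↦ ?_
    exact (Submodule.smul_mem_iff _ (inv_ne_zero ht)).1
      (Submodule.subset_span (inv_smul_mem_thicken ht hz))
  have hperp : Γ.linearSpanᗮ ≤ (thicken L t).linearSpan :=
    Submodule.comap_subtype_eq_top.1 (top_unique (IsZLattice.span_top.ge.trans hL))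
  exact top_unique (Submodule.sup_orthogonal_of_hasOrthogonalProjection.ge.trans
    (sup_le hspan hperp))

theorem tendsto_thicken : Tendsto (thicken L) (𝓝[≠] 0) (𝓝 Γ) := by
  refine tendsto_nhds_of_eventually (fun x hx ↦ ?_)
    fun x hx U hU ↦ .of_forall fun t ↦ ⟨x, mem_thicken_of_mem t hx, mem_of_mem_nhds hU⟩
  have hlim : Tendsto (fun p : ℝ × Euc n ↦ p.1 • Γ.linearSpanᗮ.orthogonalProjectionOnto p.2)
      (𝓝[≠] 0 ×ˢ 𝓝 x) (𝓝 0) := by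
    refine Tendsto.mono_left ?_ (prod_mono_left _ nhdsWithin_le_nhds)
    rw [← nhds_prod_eq]
    exact Continuous.tendsto' (by fun_prop) _ _ (zero_smul ℝ _)
  have hdiscrete : ∀ᶠ z in 𝓝 (0 : Γ.linearSpanᗮ), z ∈ L → z = 0 :=
    eventually_nhdsWithin_iff.1 <|
      singleton_mem_nhdsWithin_of_mem_discrete ⟨‹DiscreteTopology L›⟩ L.zero_mem
  have hne : ∀ᶠ t : ℝ in 𝓝[≠] 0, t ≠ 0 := eventually_mem_nhdsWithin
  have hnotMem : ∀ᶠ y in 𝓝 x, y ∉ Γ.1 := Γ.2.isOpen_compl.mem_nhds hx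
  filter_upwards [hlim.eventually hdiscrete, hne.prod_mk hnotMem]
  rintro ⟨t, y⟩ hz ⟨ht, hyΓ⟩ hy
  obtain ⟨hyΓ', hyL⟩ := mem_thicken.1 hy
  have hperp : Γ.linearSpanᗮ.orthogonalProjectionOnto y = 0 :=
    (smul_eq_zero_iff_right ht).1 (hz hyL)
  have hyV : y ∈ Γ.linearSpan := by
    rwa [Submodule.orthogonalProjectionOnto_eq_zero_iff, Submodule.orthogonal_orthogonal] at hperp
  rw [Submodule.starProjection_eq_self_iff.2 hyV] at hyΓ'
  exact hyΓ hyΓ'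

end Thicken

theorem dense_maximalRank (n : ℕ) : Dense (maximalRank n) := by
  intro Γ
  let b := finBasis ℝ Γ.linearSpanᗮ
  let L := Submodule.span ℤ (Set.range b)
  refine mem_closure_of_tendsto (tendsto_thicken (L := L)) ?_
  filter_upwards [self_mem_nhdsWithin] with t ht using thicken_mem_maximalRank ht

section Scale

instance : Top (ChabautyPoint n) := ⟨⟨⊤, isClosed_univ⟩⟩

/-- The dilate `t Γ`, with value `ℝⁿ` at `t = 0`: the limit of `t Γ` if `Γ` has maximal rank. -/
def scale (t : ℝ) (Γ : ChabautyPoint n) : ChabautyPoint n :=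
  if t = 0 then ⊤
  else ⟨Γ.1.comap (t⁻¹ • AddMonoidHom.id (Euc n)), Γ.2.preimage (continuous_const_smul t⁻¹)⟩

theorem scale_zero (Γ : ChabautyPoint n) : scale 0 Γ = ⊤ :=
  if_pos rfl

theorem mem_scale_zero (x : Euc n) : x ∈ (scale 0 Γ).1 := by
  rw [scale_zero]
  exact AddSubgroup.mem_top x

theorem mem_scale {t : ℝ} (ht : t ≠ 0) {x : Euc n} : x ∈ (scale t Γ).1 ↔ t⁻¹ • x ∈ Γ.1 :=
  iff_of_eq (congrArg (fun Δ : ChabautyPoint n ↦ x ∈ Δ.1) (if_neg ht))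

theorem scale_one (Γ : ChabautyPoint n) : scale 1 Γ = Γ :=
  Subtype.ext <| AddSubgroup.ext fun x ↦ by rw [mem_scale one_ne_zero, inv_one, one_smul]

theorem smul_mem_scale (t : ℝ) {x : Euc n} (hx : x ∈ Γ.1) : t • x ∈ (scale t Γ).1 := by
  rcases eq_or_ne t 0 with rfl | ht
  · exact mem_scale_zero _
  · rwa [mem_scale ht, inv_smul_smul₀ ht]

theorem scale_mem_maximalRank (t : ℝ) (hΓ : Γ ∈ maximalRank n) : scale t Γ ∈ maximalRank n := by
  rcases eq_or_ne t 0 with rfl | ht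
  · exact top_unique fun x _ ↦ Submodule.subset_span (mem_scale_zero x)
  · refine top_unique (hΓ.ge.trans (Submodule.span_le.2 fun x hx ↦ ?_))
    exact (Submodule.smul_mem_iff _ ht).1 (Submodule.subset_span (smul_mem_scale t hx))

theorem continuousAt_scale_of_ne_zero {t : ℝ} (ht : t ≠ 0) (Γ : ChabautyPoint n) :
    ContinuousAt (fun p : ℝ × ChabautyPoint n ↦ scale p.1 p.2) (t, Γ) := by
  have hne : ∀ᶠ p in 𝓝 (t, Γ), p.1 ≠ 0 := continuousAt_fst.eventually_ne ht
  refine tendsto_nhds_of_eventually (fun x hx ↦ ?_) fun x hx U hU ↦ ?_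
  · have hdilate : ContinuousAt
        (fun q : (ℝ × ChabautyPoint n) × Euc n ↦ (q.1.2, q.1.1⁻¹ • q.2)) ((t, Γ), x) := by
      fun_prop (disch := exact ht)
    rw [mem_scale ht] at hx
    rw [← nhds_prod_eq]
    filter_upwards [hdilate.eventually (isClosed_setOf_mem.isOpen_compl.mem_nhds hx),
      continuousAt_fst.eventually hne] with q hq hq0
    rwa [mem_scale hq0]
  · rw [mem_scale ht] at hx
    have hsmul : Tendsto (fun q : ℝ × Euc n ↦ q.1 • q.2) (𝓝 t ×ˢ 𝓝 (t⁻¹ • x)) (𝓝 x) := by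
      rw [← nhds_prod_eq]
      exact Continuous.tendsto' (by fun_prop) _ _ (smul_inv_smul₀ ht x)
    obtain ⟨p, hp, q, hq, hpq⟩ := eventually_prod_iff.1 (hsmul.eventually hU)
    rw [nhds_prod_eq]
    filter_upwards [hp.prod_mk (eventually_exists_mem hx hq)]
    rintro ⟨r, Δ⟩ ⟨hr, y, hyΔ, hy⟩
    exact ⟨r • y, smul_mem_scale r hyΔ, hpq hr hy⟩

theorem exists_mem_scale_norm_sub_le {ι : Type*} [Fintype ι] (b : Basis ι ℝ (Euc n))
    (hb : ∀ i, b i ∈ Γ.1) (t : ℝ) (x : Euc n) :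
    ∃ y ∈ (scale t Γ).1, ‖x - y‖ ≤ |t| * ∑ i, ‖b i‖ := by
  rcases eq_or_ne t 0 with rfl | ht
  · exact ⟨x, mem_scale_zero x, by simp⟩
  · obtain ⟨g, hg, hxg⟩ := exists_mem_norm_sub_le_sum_norm_basis b hb (t⁻¹ • x)
    refine ⟨t • g, smul_mem_scale t hg, ?_⟩
    calc ‖x - t • g‖ = |t| * ‖t⁻¹ • x - g‖ := by
          rw [← Real.norm_eq_abs, ← norm_smul, smul_sub, smul_inv_smul₀ ht]
      _ ≤ |t| * ∑ i, ‖b i‖ := by gcongr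

theorem continuousAt_scale_zero (hΓ : Γ ∈ maximalRank n) :
    ContinuousAt (fun p : ℝ × ChabautyPoint n ↦ scale p.1 p.2) (0, Γ) := by
  refine tendsto_nhds_of_eventually (fun x hx ↦ absurd (mem_scale_zero x) hx) fun x _ U hU ↦ ?_
  obtain ⟨ε, hε, hεU⟩ := Metric.mem_nhds_iff.1 hU
  obtain ⟨C, hC⟩ := eventually_exists_basis_sum_norm_lt hΓ
  have hsmall : ∀ᶠ r in 𝓝 (0 : ℝ), |r| * C < ε :=
    (Continuous.tendsto' (by fun_prop) 0 0 (by simp)).eventually_lt_const hε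
  rw [nhds_prod_eq]
  filter_upwards [hsmall.prod_mk hC]
  rintro ⟨r, Δ⟩ ⟨hr, b, hb, hbC⟩
  obtain ⟨y, hy, hxy⟩ := exists_mem_scale_norm_sub_le b hb r x
  refine ⟨y, hy, hεU (mem_ball_iff_norm'.2 ?_)⟩
  calc ‖x - y‖ ≤ |r| * ∑ i, ‖b i‖ := hxy
    _ ≤ |r| * C := by gcongr
    _ < ε := hr

theorem continuousAt_scale (t : ℝ) (hΓ : Γ ∈ maximalRank n) :
    ContinuousAt (fun p : ℝ × ChabautyPoint n ↦ scale p.1 p.2) (t, Γ) := by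
  rcases eq_or_ne t 0 with rfl | ht
  · exact continuousAt_scale_zero hΓ
  · exact continuousAt_scale_of_ne_zero ht Γ

end Scale

theorem contractibleSpace_maximalRank (n : ℕ) : ContractibleSpace (maximalRank n) := by
  have htop : (⊤ : ChabautyPoint n) ∈ maximalRank n := Submodule.span_univ
  have hcont : Continuous fun p : unitInterval × maximalRank n ↦ scale (p.1 : ℝ) p.2.1 :=
    continuous_iff_continuousAt.2 fun p ↦
      (continuousAt_scale p.1 p.2.2).comp
        (f := fun p : unitInterval × maximalRank n ↦ ((p.1 : ℝ), p.2.1)) (by fun_prop)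
  refine (contractible_iff_id_nullhomotopic _).2 ⟨⟨⊤, htop⟩, .symm ⟨?_⟩⟩
  exact
    { toFun := fun p ↦ ⟨scale p.1 p.2.1, scale_mem_maximalRank p.1 p.2.2⟩
      continuous_toFun := hcont.subtype_mk _
      map_zero_left := fun Γ ↦ Subtype.ext (scale_zero Γ.1)
      map_one_left := fun Γ ↦ Subtype.ext (scale_one Γ.1) }

end ChabautyPoint

/-- The set of closed subgroups of ℝⁿ of maximal rank (spanning ℝⁿ) is open, dense and
contractible in the Chabauty space. -/
theorem maximal_rank_open_dense_contractible (n : ℕ) :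
    let R : Set (ChabautyPoint n) :=
      {Γ : ChabautyPoint n | Submodule.span ℝ (Γ.1 : Set (Euc n)) = ⊤}
    IsOpen R ∧ Dense R ∧ ContractibleSpace R := by
  exact ⟨ChabautyPoint.isOpen_maximalRank n, ChabautyPoint.dense_maximalRank n,
    ChabautyPoint.contractibleSpace_maximalRank n⟩
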